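/- Let K be a field of prime characteristic p, and let A be an associative unital K-algebra with elements g, x, y and scalars λ₁, λ₂ ∈ {0, 1} ⊆ K, λ₃ ∈ K, satisfying: g^m = 1 for some positive integer m, gx − xg = λ₁(g − g²), gy − yg = λ₂(g − g²), and xy − yx + λ₁y − λ₂x = λ₃(1 − g²). Then for every integer n ≥ 2, (x)(ad_R y)^n = λ₂^{n−1}·(x)(ad_R y) − λ₃·Σ_{i=0}^{n−2} λ₂^i·(g²)(ad_R y)^{n−1−i}. In particular, (x)(ad_R y)^p = λ₂^{p−1}·(x)(ad_R y). (Lemma 2.8(1) of the paper.) -/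

import Mathlib

open Polynomial in
theorem aux_prod (K : Type*) [Field K] (p : ℕ) [hp : Fact p.Prime] [CharP K p] :
    ∏ k ∈ Finset.range p, (X - C (k : K)) = X ^ p - X := by
  have h0 : ∏ a : ZMod p, (X - C a) = (X ^ p - X : (ZMod p)[X]) := by
    have hr := FiniteField.roots_X_pow_card_sub_X (ZMod p)
    rw [ZMod.card] at hr
    have hm : (X ^ p - X : (ZMod p)[X]).Monic :=
      monic_X_pow_sub (by rw [degree_X]; exact_mod_cast hp.out.one_lt)
    have h := prod_multiset_X_sub_C_of_monic_of_roots_card_eq hm (by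
      rw [hr, FiniteField.X_pow_card_sub_X_natDegree_eq _ hp.out.one_lt]
      simp [ZMod.card])
    rw [hr] at h
    exact h
  have h1 : ∏ k ∈ Finset.range p, (X - C (k : ZMod p)) = ∏ a : ZMod p, (X - C a) := by
    refine Finset.prod_bij (fun k _ => (k : ZMod p)) (by simp) ?_ ?_ (by simp)
    · intro a ha b hb hab
      have := (ZMod.natCast_eq_natCast_iff' a b p).1 hab
      rwa [Nat.mod_eq_of_lt (Finset.mem_range.1 ha),
        Nat.mod_eq_of_lt (Finset.mem_range.1 hb)] at this
    · intro b _
      exact ⟨b.val, Finset.mem_range.2 (ZMod.val_lt b), by simp⟩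
  have h2 := congrArg (Polynomial.map (ZMod.castHom (dvd_refl p) K)) (h1.trans h0)
  simpa [Polynomial.map_prod, -ZMod.castHom_apply] using h2

open Polynomial in
theorem aux_sum (K : Type*) [Field K] (p : ℕ) [hp : Fact p.Prime] [CharP K p] :
    X * ∏ k ∈ Finset.Ico 2 p, (X - C (k : K)) = ∑ i ∈ Finset.range (p - 1), X ^ (i + 1) := by
  have h := aux_prod K p
  have h2 := hp.out.two_le
  rw [← Finset.prod_range_mul_prod_Ico _ h2] at h
  have hne : (X - C (1 : K)) ≠ 0 := X_sub_C_ne_zero 1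
  apply mul_left_cancel₀ hne
  simp only [Finset.prod_range_succ, Finset.prod_range_zero, Nat.cast_zero, Nat.cast_one,
    C_0, sub_zero, one_mul] at h
  have hg := mul_geom_sum (X : K[X]) (p - 1)
  calc _ = (X ^ p - X : K[X]) := by rw [← h]; ring
    _ = (X * (X ^ (p - 1) - 1) : K[X]) := by
        obtain ⟨q, rfl⟩ : ∃ q, p = q + 1 := ⟨p - 1, by omega⟩
        simp only [Nat.add_sub_cancel]; ring
    _ = _ := by
        rw [← hg, C_1]
        simp only [pow_succ, ← Finset.sum_mul]
        ring

/-- The map `b ↦ b y - y b` as a linear map. -/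
def adR (K : Type*) {A : Type*} [Field K] [Ring A] [Algebra K A] (y : A) : Module.End K A :=
  LinearMap.mulRight K y - LinearMap.mulLeft K y

theorem adR_apply (K : Type*) {A : Type*} [Field K] [Ring A] [Algebra K A] (y b : A) :
    adR K y b = b * y - y * b := rfl

theorem adR_pow_g {K A : Type*} [Field K] [Ring A] [Algebra K A] (g y : A)
    (hgy : g * y - y * g = g - g ^ 2) (k : ℕ) :
    adR K y (g ^ k) = (k : K) • (g ^ k - g ^ (k + 1)) := by
  rw [adR_apply]
  induction k with
  | zero => simp
  | succ k ih =>
    have : g ^ (k + 1) * y - y * g ^ (k + 1)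
        = g ^ k * (g * y - y * g) + (g ^ k * y - y * g ^ k) * g := by
      rw [pow_succ]; noncomm_ring
    rw [this, hgy, ih, Nat.cast_succ, add_smul, one_smul, smul_mul_assoc, add_comm]
    congr 1
    · rw [sub_mul, ← pow_succ, ← pow_succ]
    · rw [mul_sub, ← pow_succ, ← pow_add]

open Polynomial in
theorem aux_chain {K A : Type*} [Field K] [Ring A] [Algebra K A] (g y : A)
    (hgy : g * y - y * g = g - g ^ 2) (n : ℕ) (hn : 2 ≤ n) :
    ∃ c : K, aeval (adR K y) (∏ k ∈ Finset.Ico 2 n, (X - C (k : K))) (g ^ 2) = c • g ^ n := by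
  induction n, hn using Nat.le_induction with
  | base => exact ⟨1, by simp⟩
  | succ n hn ih =>
    obtain ⟨c, hc⟩ := ih
    refine ⟨-(c * n), ?_⟩
    rw [Finset.prod_Ico_succ_top hn, mul_comm, map_mul, Module.End.mul_apply, hc, map_smul,
      map_sub, aeval_X, aeval_C, LinearMap.sub_apply, adR_pow_g g y hgy,
      Module.algebraMap_end_apply, smul_sub]
    module

open Polynomial in
theorem aux_zero {K A : Type*} (p : ℕ) [hp : Fact p.Prime] [Field K] [CharP K p]
    [Ring A] [Algebra K A] (g y : A) (hgy : g * y - y * g = g - g ^ 2) :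
    ∑ i ∈ Finset.range (p - 1), (adR K y ^ (i + 1)) (g ^ 2) = 0 := by
  obtain ⟨c, hc⟩ := aux_chain (K := K) g y hgy p hp.out.two_le
  have h := congrArg (fun q => aeval (adR K y) q (g ^ 2)) (aux_sum K p)
  simp only [map_mul, aeval_X, Module.End.mul_apply, hc, map_smul, adR_pow_g g y hgy,
    CharP.cast_eq_zero, zero_smul, smul_zero, map_sum, map_pow, LinearMap.sum_apply] at h
  exact h.symm

/-- Lemma 2.8(1): with `g ^ m = 1`, `g * x - x * g = λ₁ • (g - g²)`,
`g * y - y * g = λ₂ • (g - g²)` and `x * y - y * x + λ₁ • y - λ₂ • x = λ₃ • (1 - g²)`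
(where `λ₁, λ₂ ∈ {0,1}`), for every `n ≥ 2` one has
`(x)(ad_R y)^n = λ₂^(n-1) • (x)(ad_R y) - λ₃ • ∑_{i=0}^{n-2} λ₂^i • (g²)(ad_R y)^(n-1-i)`;
in particular `(x)(ad_R y)^p = λ₂^(p-1) • (x)(ad_R y)`. -/
theorem lemma_2_8_1 {K A : Type*} (p : ℕ) [Fact p.Prime] [Field K] [CharP K p]
    [Ring A] [Algebra K A] (g x y : A) (lam1 lam2 lam3 : K)
    (h1 : lam1 = 0 ∨ lam1 = 1) (h2 : lam2 = 0 ∨ lam2 = 1)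
    (m : ℕ) (hm : 0 < m) (hgm : g ^ m = 1)
    (hgx : g * x - x * g = lam1 • (g - g ^ 2))
    (hgy : g * y - y * g = lam2 • (g - g ^ 2))
    (hxy : x * y - y * x + lam1 • y - lam2 • x = lam3 • ((1 : A) - g ^ 2)) :
    (∀ n : ℕ, 2 ≤ n →
      (fun b => b * y - y * b)^[n] x =
        lam2 ^ (n - 1) • (x * y - y * x) -
          lam3 • ∑ i ∈ Finset.range (n - 1),
            lam2 ^ i • (fun b => b * y - y * b)^[n - 1 - i] (g ^ 2)) ∧
    (fun b => b * y - y * b)^[p] x = lam2 ^ (p - 1) • (x * y - y * x) := by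
  have hfun : (fun b => b * y - y * b) = ⇑(adR K y) := rfl
  have hx1 : x * y - y * x = lam2 • x - lam1 • y + lam3 • ((1 : A) - g ^ 2) := by
    rw [← hxy]; abel
  have hy0 : adR K y y = 0 := by simp [adR_apply]
  have h10 : adR K y 1 = 0 := by simp [adR_apply]
  have hD2 : adR K y (x * y - y * x) = lam2 • (x * y - y * x) - lam3 • adR K y (g ^ 2) := by
    conv_lhs => rw [hx1]
    rw [map_add, map_sub, map_smul, map_smul, map_smul, map_sub, hy0, h10, adR_apply K y x]
    simp [sub_eq_add_neg]
  have hall : ∀ n : ℕ, 2 ≤ n →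
      (fun b => b * y - y * b)^[n] x =
        lam2 ^ (n - 1) • (x * y - y * x) -
          lam3 • ∑ i ∈ Finset.range (n - 1),
            lam2 ^ i • (fun b => b * y - y * b)^[n - 1 - i] (g ^ 2) := by
    intro n hn
    rw [hfun]
    induction n, hn using Nat.le_induction with
    | base =>
      simp only [Function.iterate_succ, Function.iterate_zero, Function.comp, id]
      rw [adR_apply K y x, hD2]
      simp
    | succ n hn ih =>
      obtain ⟨q, rfl⟩ : ∃ q, n = q + 1 := ⟨n - 1, by omega⟩
      rw [Function.iterate_succ_apply', ih]
      simp only [Nat.add_sub_cancel]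
      rw [map_sub, map_smul, map_smul, map_sum, hD2, Finset.sum_range_succ]
      have : ∀ i ∈ Finset.range q, adR K y (lam2 ^ i • (⇑(adR K y))^[q - i] (g ^ 2))
          = lam2 ^ i • (⇑(adR K y))^[q + 1 - i] (g ^ 2) := by
        intro i hi
        have hi := Finset.mem_range.1 hi
        rw [map_smul, show q + 1 - i = (q - i).succ by omega, Function.iterate_succ_apply']
      rw [Finset.sum_congr rfl this]
      simp only [Nat.add_sub_cancel_left, Function.iterate_one]
      rw [smul_sub, smul_add, smul_smul, ← pow_succ, smul_comm (lam2 ^ q) lam3]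
      abel
  refine ⟨hall, ?_⟩
  have hp2 := (Fact.out : p.Prime).two_le
  rw [hall p hp2, hfun]
  suffices h : ∑ i ∈ Finset.range (p - 1), lam2 ^ i • (⇑(adR K y))^[p - 1 - i] (g ^ 2) = 0 by
    rw [h, smul_zero, sub_zero]
  rcases h2 with rfl | rfl
  · rw [zero_smul] at hgy
    have hg : adR K y (g ^ 2) = 0 := by
      have : Commute g y := sub_eq_zero.1 hgy
      rw [adR_apply, (this.pow_left 2).eq, sub_self]
    apply Finset.sum_eq_zero
    intro i hi
    have hi := Finset.mem_range.1 hi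
    obtain ⟨q, hq⟩ : ∃ q, p - 1 - i = q + 1 := ⟨p - 1 - i - 1, by omega⟩
    rw [hq, Function.iterate_succ_apply, hg, ← Module.End.coe_pow, map_zero, smul_zero]
  · rw [one_smul] at hgy
    rw [← aux_zero (K := K) p g y hgy, ← Finset.sum_range_reflect]
    apply Finset.sum_congr rfl
    intro i hi
    have hi := Finset.mem_range.1 hi
    rw [one_pow, one_smul, ← Module.End.coe_pow, show p - 1 - (p - 1 - 1 - i) = i + 1 by omega]
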